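/- arXiv:2601.13855 — 3 statements merged into one kernel-verified Lean document; each statement's English description precedes it below -/
import Mathlib

section
/- Let N₁ : ℝ → ℝ satisfy N₁(G) ≥ 2 for all large G and ∫₂^{N₁(G)} (−P(t)) dt = a·G + O(1) as G → ∞. Let k ≥ 2 be fixed and let g_0, ..., g_k : ℝ → ℝ with g_0(T) = T, each g_r(T) → ∞ as T → ∞, and g_r(T) − g_{r−1}(T) ∼ (1−c)·T/ln T as T → ∞ for r = 1, ..., k. Then the sequence N₁(g_0(T)), ..., N₁(g_k(T)) partitions the integral ∫_{N₁(T)}^{N₁(g_k(T))} (−P(t)) dt into k parts ∫_{N₁(g_{r−1}(T))}^{N₁(g_r(T))} (−P(t)) dt whose sum is the whole integral, and these parts are asymptotically equal: for each r = 1, ..., k−1, ∫_{N₁(g_{r−1}(T))}^{N₁(g_r(T))} (−P(t)) dt ∼ ∫_{N₁(g_r(T))}^{N₁(g_{r+1}(T))} (−P(t)) dt as T → ∞. -/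
/-!
Put `I x = ∫₂ˣ (-P)`. Since `P` is interval integrable to the right of `2`, each part of the
partition equals `I (N₁ (g r T)) - I (N₁ (g (r - 1) T))`, so the parts telescope to the whole integral.
By the hypothesis on `N₁`, the `r`-th part is `a (g r T - g (r - 1) T) + O(1)`. As `c < 2/3 < 1`, the
scale `(1 - c) T / ln T` tends to infinity and absorbs the `O(1)`; hence every part is asymptotic to
`a (1 - c) T / ln T`, whatever `r` is (`part_isEquivalent`), and any two parts are equivalent.
-/

open Filter Real Asymptotics MeasureTheory

noncomputable def pichar (t : ℝ) : ℝ := (Nat.primeCounting ⌊t⌋₊ : ℝ)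

noncomputable def P (t : ℝ) : ℝ := pichar t - ∫ u in (2:ℝ)..t, 1 / Real.log u

noncomputable def a : ℝ := Real.exp 4.5

noncomputable def c : ℝ := Real.eulerMascheroniConstant

noncomputable def Z (t : ℝ) : ℝ := ‖riemannZeta (1/2 + (t : ℂ) * Complex.I)‖ ^ 2

lemma intervalIntegrable_neg_P {x y : ℝ} (hx : 2 ≤ x) (hy : 2 ≤ y) :
    IntervalIntegrable (fun t => -P t) volume x y := by
  have key : ∀ z : ℝ, 2 ≤ z → IntervalIntegrable (fun t => -P t) volume 2 z := by
    intro z hz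
    have hpi : Monotone pichar := fun s t hst =>
      Nat.cast_le.mpr (Nat.monotone_primeCounting (Nat.floor_mono hst))
    have hlog : IntervalIntegrable (fun u : ℝ => 1 / Real.log u) volume 2 z := by
      apply ContinuousOn.intervalIntegrable
      rw [Set.uIcc_of_le hz]
      intro u hu
      have hu2 : (2 : ℝ) ≤ u := hu.1
      have hu0 : u ≠ 0 := by linarith
      have hl : Real.log u ≠ 0 := (Real.log_pos (by linarith)).ne'
      exact (continuousAt_const.div (Real.continuousAt_log hu0) hl).continuousWithinAt
    have hprim : IntervalIntegrable (fun t : ℝ => ∫ u in (2:ℝ)..t, 1 / Real.log u) volume 2 z := by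
      apply ContinuousOn.intervalIntegrable
      apply intervalIntegral.continuousOn_primitive_interval
      rw [Set.uIcc_of_le hz]
      exact (intervalIntegrable_iff_integrableOn_Icc_of_le hz).mp hlog
    exact (hpi.intervalIntegrable.sub hprim).neg
  exact (key x hx).symm.trans (key y hy)

lemma one_isLittleO_scale :
    (fun _ : ℝ => (1 : ℝ)) =o[atTop] (fun T : ℝ => (1 - c) * T / Real.log T) := by
  have hc : c < 1 :=
    Real.eulerMascheroniConstant_lt_two_thirds.trans (by norm_num)
  have h1 : Tendsto (fun T : ℝ => T / Real.log T) atTop atTop := by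
    have h := (Real.tendsto_exp_div_pow_atTop 1).comp Real.tendsto_log_atTop
    refine h.congr' ?_
    filter_upwards [eventually_gt_atTop 0] with T hT
    simp [Real.exp_log hT]
  have h2 : Tendsto (fun T : ℝ => (1 - c) * T / Real.log T) atTop atTop := by
    simpa only [mul_div_assoc] using h1.const_mul_atTop (sub_pos.mpr hc)
  exact (isLittleO_const_left.mpr (Or.inr (tendsto_norm_atTop_atTop.comp h2)))

/-- If `u` and `v` tend to infinity at distance `∼ (1 - c) T / ln T`, then the integral of `-P`
between `N₁ u` and `N₁ v` is asymptotic to `a (1 - c) T / ln T`. -/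
lemma part_isEquivalent (N₁ : ℝ → ℝ)
    (hN2 : ∀ᶠ G in atTop, 2 ≤ N₁ G)
    (hN : (fun G => (∫ t in (2:ℝ)..N₁ G, -P t) - a * G) =O[atTop] (fun _ => (1:ℝ)))
    (u v : ℝ → ℝ) (hu : Tendsto u atTop atTop) (hv : Tendsto v atTop atTop)
    (huv : (fun T => v T - u T) ~[atTop] (fun T => (1 - c) * T / Real.log T)) :
    (fun T => ∫ t in N₁ (u T)..N₁ (v T), -P t) ~[atTop]
      (fun T => a * ((1 - c) * T / Real.log T)) := by
  have ha : a ≠ 0 := (Real.exp_pos _).ne'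
  have hmain : (fun T => a * (v T - u T)) ~[atTop] (fun T => a * ((1 - c) * T / Real.log T)) :=
    (IsEquivalent.refl (u := fun _ : ℝ => a)).mul huv
  have hone := one_isLittleO_scale.const_mul_right ha
  have herr := ((hN.comp_tendsto hv).trans_isLittleO hone).sub
    ((hN.comp_tendsto hu).trans_isLittleO hone)
  refine (hmain.add_isLittleO herr).congr_left ?_
  filter_upwards [hu.eventually hN2, hv.eventually hN2] with T h1 h2
  have h := intervalIntegral.integral_interval_sub_left
    (intervalIntegrable_neg_P le_rfl h2) (intervalIntegrable_neg_P le_rfl h1)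
  simp only [Pi.add_apply, Function.comp_apply]
  rw [← h]
  ring

/-- Theorem 1: the sequence `N₁(g r T)` partitions the integral
`∫_{N₁ T}^{N₁(g k T)} (-P)` into `k` asymptotically equal parts. -/
theorem stmt_5 (N₁ : ℝ → ℝ)
    (hN2 : ∀ᶠ G in atTop, 2 ≤ N₁ G)
    (hN : (fun G => (∫ t in (2:ℝ)..N₁ G, -P t) - a * G) =O[atTop] (fun _ => (1:ℝ)))
    (k : ℕ) (hk : 2 ≤ k) (g : ℕ → ℝ → ℝ)
    (hg0 : ∀ T, g 0 T = T)
    (hgtop : ∀ r, r ≤ k → Tendsto (g r) atTop atTop)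
    (hdiff : ∀ r, 1 ≤ r → r ≤ k →
      (fun T => g r T - g (r - 1) T) ~[atTop] (fun T => (1 - c) * T / Real.log T)) :
    (∀ᶠ T in atTop,
      (∫ t in N₁ (g 0 T)..N₁ (g k T), -P t) =
        ∑ r ∈ Finset.Icc 1 k, ∫ t in N₁ (g (r - 1) T)..N₁ (g r T), -P t) ∧
    (∀ r, 1 ≤ r → r ≤ k - 1 →
      (fun T => ∫ t in N₁ (g (r - 1) T)..N₁ (g r T), -P t) ~[atTop]
        (fun T => ∫ t in N₁ (g r T)..N₁ (g (r + 1) T), -P t)) := by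
  constructor
  · have hev : ∀ᶠ T in atTop, ∀ r ∈ Finset.range (k + 1), 2 ≤ N₁ (g r T) :=
      (Filter.eventually_all_finset _).mpr fun r hr =>
        (hgtop r (Nat.lt_succ_iff.mp (Finset.mem_range.mp hr))).eventually hN2
    filter_upwards [hev] with T hT
    have h2 : ∀ r, r ≤ k → 2 ≤ N₁ (g r T) := fun r hr =>
      hT r (Finset.mem_range.mpr (Nat.lt_succ_of_le hr))
    have hsum := intervalIntegral.sum_integral_adjacent_intervals
      (f := fun t => -P t) (μ := volume) (a := fun r => N₁ (g r T)) (n := k)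
      (fun r hr => intervalIntegrable_neg_P (h2 r hr.le) (h2 (r + 1) hr))
    rw [← hsum, ← Finset.Ico_add_one_right_eq_Icc, Finset.sum_Ico_eq_sum_range]
    refine Finset.sum_congr (by simp) fun r _ => ?_
    rw [Nat.add_sub_cancel_left, Nat.add_comm 1 r]
  · intro r h1 hrk
    have hr : r + 1 ≤ k := by omega
    have hA := part_isEquivalent N₁ hN2 hN _ _ (hgtop (r - 1) (by omega)) (hgtop r (by omega))
      (hdiff r h1 (by omega))
    have hB := part_isEquivalent N₁ hN2 hN _ _ (hgtop r (by omega)) (hgtop (r + 1) hr)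
      (hdiff (r + 1) (by omega) hr)
    exact hA.trans hB.symm
end

section
/- Let N₁ : ℝ → ℝ satisfy N₁(G) ≥ 2 for all large G and ∫₂^{N₁(G)} (−P(t)) dt = a·G + O(1) as G → ∞. Let g : ℝ → ℝ satisfy g(T) − T ∼ (1−c)·T/ln T as T → ∞. Then ∫_{N₁(τ/(a(1−c)))}^{N₁(g(τ/(a(1−c))))} (−P(t)) dt ∼ τ/ln τ as τ → ∞. -/
/-!
Write `F x = ∫₂ˣ (-P)`. Since `P` is locally integrable on `[2, ∞)`, the integral in question is
`F (N₁ (g T)) - F (N₁ T)` with `T = τ / (a (1 - c))`. As `c < 1`, the hypothesis on `g` forces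
`g T → ∞`, so this difference equals `a (g T - T) + O(1)`, which is asymptotic to
`a (1 - c) T / log T` because `T / log T → ∞`. Substituting `T` gives `τ / log (τ / (a (1 - c)))`,
and a constant factor inside the logarithm is negligible.
-/

open Filter Real Asymptotics MeasureTheory

/-- On `[2, ∞)` the function `P` is a difference of two monotone functions, hence integrable on
compact subintervals. -/
lemma P_intervalIntegrable {x y : ℝ} (hx : 2 ≤ x) (hy : 2 ≤ y) :
    IntervalIntegrable P volume x y := by
  have hsub : Set.uIcc x y ⊆ Set.Ici 2 := fun z hz => (le_inf hx hy).trans hz.1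
  have hlog : ∀ p q : ℝ, 2 ≤ p → 2 ≤ q →
      IntervalIntegrable (fun u => 1 / Real.log u) volume p q := by
    intro p q hp hq
    apply ContinuousOn.intervalIntegrable
    intro z hz
    have hz2 : (2 : ℝ) ≤ z := (le_inf hp hq).trans hz.1
    have h1 : Real.log z ≠ 0 := (Real.log_pos (by linarith)).ne'
    exact (continuousAt_const.div (Real.continuousAt_log (by linarith)) h1).continuousWithinAt
  have h1 : MonotoneOn pichar (Set.Ici 2) := by
    intro s _ t _ hst
    exact Nat.cast_le.2 (Nat.monotone_primeCounting (Nat.floor_mono hst))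
  have h2 : MonotoneOn (fun t => ∫ u in (2:ℝ)..t, 1 / Real.log u) (Set.Ici 2) := by
    intro s hs t ht hst
    have hs' : (2 : ℝ) ≤ s := hs
    have h := intervalIntegral.integral_interval_sub_left
      (hlog 2 t le_rfl ht) (hlog 2 s le_rfl hs)
    have h0 : 0 ≤ ∫ u in s..t, 1 / Real.log u := by
      apply intervalIntegral.integral_nonneg hst
      intro u hu
      exact one_div_nonneg.2 (Real.log_nonneg (by linarith [hu.1]))
    show (∫ u in (2:ℝ)..s, 1 / Real.log u) ≤ ∫ u in (2:ℝ)..t, 1 / Real.log u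
    linarith
  exact (h1.mono hsub).intervalIntegrable.sub (h2.mono hsub).intervalIntegrable

lemma tendsto_div_log_atTop : Tendsto (fun T : ℝ => T / Real.log T) atTop atTop := by
  have h := Real.isLittleO_log_id_atTop.tendsto_div_nhds_zero
  have h' : Tendsto (fun T : ℝ => Real.log T / id T) atTop (nhdsWithin 0 (Set.Ioi 0)) := by
    refine tendsto_nhdsWithin_iff.2 ⟨h, ?_⟩
    filter_upwards [eventually_gt_atTop 1] with T hT
    exact div_pos (Real.log_pos hT) (by simp only [id]; linarith)
  refine h'.inv_tendsto_nhdsGT_zero.congr fun T => ?_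
  simp

/-- Formula (4.3): after the substitution `a(1-c)T = τ` the increment of the Ingham
integral is asymptotic to `τ/ln τ`. -/
theorem stmt_10 (N₁ : ℝ → ℝ)
    (hN2 : ∀ᶠ G in atTop, 2 ≤ N₁ G)
    (hN : (fun G => (∫ t in (2:ℝ)..N₁ G, -P t) - a * G) =O[atTop] (fun _ => (1:ℝ)))
    (g : ℝ → ℝ)
    (hg1 : (fun T => g T - T) ~[atTop] (fun T => (1 - c) * T / Real.log T)) :
    (fun τ => ∫ t in N₁ (τ / (a * (1 - c)))..N₁ (g (τ / (a * (1 - c)))), -P t)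
      ~[atTop] (fun τ => τ / Real.log τ) := by
  have hc : 0 < 1 - c := by
    have := Real.eulerMascheroniConstant_lt_two_thirds
    unfold c; linarith
  have ha : 0 < a := Real.exp_pos _
  have hk : 0 < a * (1 - c) := mul_pos ha hc
  have hmain : Tendsto (fun T : ℝ => (1 - c) * T / Real.log T) atTop atTop := by
    refine (tendsto_div_log_atTop.const_mul_atTop hc).congr fun T => ?_
    ring
  have hg : Tendsto g atTop atTop := by
    refine ((hg1.symm.tendsto_atTop hmain).atTop_add_atTop tendsto_id).congr fun T => ?_
    simp
  have hlin : (fun T => a * (g T - T)) ~[atTop] (fun T => a * ((1 - c) * T / Real.log T)) :=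
    (IsEquivalent.refl (u := fun _ : ℝ => a)).mul hg1
  have herr : (fun T => ((∫ t in (2:ℝ)..N₁ (g T), -P t) - a * g T)
      - ((∫ t in (2:ℝ)..N₁ T, -P t) - a * T)) =o[atTop]
      (fun T => a * ((1 - c) * T / Real.log T)) := by
    refine ((hN.comp_tendsto hg).sub hN).trans_isLittleO ?_
    exact isLittleO_const_left.2
      (Or.inr (tendsto_norm_atTop_atTop.comp (hmain.const_mul_atTop ha)))
  have hT : (fun T => ∫ t in N₁ T..N₁ (g T), -P t) ~[atTop]
      (fun T => a * ((1 - c) * T / Real.log T)) := by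
    refine (hlin.add_isLittleO herr).congr_left ?_
    filter_upwards [hN2, hg.eventually hN2] with T h1 h2
    have h := intervalIntegral.integral_interval_sub_left
      (P_intervalIntegrable le_rfl h2).neg (P_intervalIntegrable le_rfl h1).neg
    simp only [Pi.neg_apply] at h
    rw [← h, Pi.add_apply]
    ring
  have hsubst := hT.comp_tendsto (tendsto_id.atTop_div_const hk)
  have hlog : (fun τ => Real.log (τ / (a * (1 - c)))) ~[atTop] Real.log := by
    have hconst : (fun _ : ℝ => Real.log (a * (1 - c))) =o[atTop] Real.log :=
      isLittleO_const_left.2 (Or.inr (tendsto_norm_atTop_atTop.comp Real.tendsto_log_atTop))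
    refine (IsEquivalent.refl.sub_isLittleO hconst).congr_left ?_
    filter_upwards [eventually_gt_atTop 0] with τ hτ
    simp [Real.log_div hτ.ne' hk.ne']
  refine hsubst.trans (((IsEquivalent.refl (u := fun τ : ℝ => τ)).div hlog).congr_left ?_)
  refine Eventually.of_forall fun τ => ?_
  simp only [Function.comp, id, Pi.div_apply]
  field_simp
end

section
/- Let N₁ : ℝ → ℝ satisfy N₁(G) ≥ 2 for all large G and ∫₂^{N₁(G)} (−P(t)) dt = a·G + O(1) as G → ∞. Let g : ℝ → ℝ satisfy (i) g(T) − T ∼ (1−c)·T/ln T as T → ∞, (ii) for every fixed l > 0, ∫_{g(T)}^{g(T+2l)} |ζ(1/2+it)|² dt = (1+o(1))·2l·ln T as T → ∞, and (iii) ∫_T^{g(T)} |ζ(1/2+it)|² dt ∼ (1−c)·T as T → ∞. Then the following asymptotic factorization formula holds: ∫_T^{g(T)} |ζ(1/2+it)|² dt ∼ [∫_{N₁(T)}^{N₁(g(T))} (−P(t)) dt] · [∫_{g(T)}^{g(T+1/a)} |ζ(1/2+it)|² dt] as T → ∞. -/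
/-!
Write `F G = ∫_2^{N₁ G} (-P)` and `E G = F G - a G = O(1)`. By additivity of the integral
(`P` is a difference of two monotone functions on `[2, ∞)`, hence integrable on bounded intervals),
`∫_{N₁ T}^{N₁ (g T)} (-P) = a (g T - T) + E (g T) - E T`. Since `g T - T ∼ (1 - c) T / log T → ∞`
(here `c < 1` is used), the bounded terms are negligible and this factor is `∼ a (1 - c) T / log T`.
Property (ii) with `2 l = 1 / a` makes the other factor `∼ log T / a`, so the product is
`∼ (1 - c) T`, which is also the size of the left-hand side by property (iii).
-/

open Filter Real Asymptotics MeasureTheory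

lemma one_sub_c_pos : 0 < 1 - c := by
  have := Real.eulerMascheroniConstant_lt_two_thirds
  unfold c
  linarith

lemma tendsto_mul_div_log_atTop :
    Tendsto (fun T : ℝ => (1 - c) * T / Real.log T) atTop atTop := by
  have h0 : Tendsto (fun T : ℝ => Real.log T / T) atTop (nhdsWithin 0 (Set.Ioi 0)) := by
    refine tendsto_nhdsWithin_iff.2 ⟨Real.isLittleO_log_id_atTop.tendsto_div_nhds_zero, ?_⟩
    filter_upwards [eventually_gt_atTop 1] with T hT
    exact div_pos (Real.log_pos hT) (by linarith)
  refine ((tendsto_inv_nhdsGT_zero.comp h0).const_mul_atTop one_sub_c_pos).congr fun T => ?_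
  simp only [Function.comp_apply, inv_div]
  ring

/-- Theorem 7: asymptotic factorization formula
`∫_T^{g T} |ζ|² ∼ [∫_{N₁ T}^{N₁(g T)} (-P)] · [∫_{g T}^{g(T+1/a)} |ζ|²]`. -/
theorem stmt_14 (N₁ : ℝ → ℝ)
    (hN2 : ∀ᶠ G in atTop, 2 ≤ N₁ G)
    (hN : (fun G => (∫ t in (2:ℝ)..N₁ G, -P t) - a * G) =O[atTop] (fun _ => (1:ℝ)))
    (g : ℝ → ℝ)
    (hg1 : (fun T => g T - T) ~[atTop] (fun T => (1 - c) * T / Real.log T))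
    (hg2 : ∀ l : ℝ, 0 < l →
      (fun T => ∫ t in g T..g (T + 2 * l), Z t) ~[atTop] (fun T => 2 * l * Real.log T))
    (hg3 : (fun T => ∫ t in T..g T, Z t) ~[atTop] (fun T => (1 - c) * T)) :
    (fun T => ∫ t in T..g T, Z t) ~[atTop]
      (fun T => (∫ t in N₁ T..N₁ (g T), -P t) * ∫ t in g T..g (T + 1 / a), Z t) := by
  have ha : 0 < a := Real.exp_pos _
  have hgap : Tendsto (fun T => g T - T) atTop atTop :=
    hg1.symm.tendsto_atTop tendsto_mul_div_log_atTop
  have hg : Tendsto g atTop atTop :=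
    (hgap.atTop_add_atTop tendsto_id).congr fun T => by simp
  -- the error terms `E (g T) - E T` are bounded, hence negligible against `(1 - c) T / log T`
  have hE : (fun T => ((∫ t in (2:ℝ)..N₁ (g T), -P t) - a * g T)
      - ((∫ t in (2:ℝ)..N₁ T, -P t) - a * T)) =o[atTop]
      (fun T => a * ((1 - c) * T / Real.log T)) := by
    refine ((hN.comp_tendsto hg).sub hN).trans_isLittleO ?_
    refine isLittleO_const_left.2 (Or.inr ?_)
    exact tendsto_norm_atTop_atTop.comp (tendsto_mul_div_log_atTop.const_mul_atTop ha)
  have hA : (fun T => ∫ t in N₁ T..N₁ (g T), -P t) ~[atTop]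
      (fun T => a * ((1 - c) * T / Real.log T)) := by
    have hmain : (fun T => a * (g T - T)) ~[atTop]
        (fun T => a * ((1 - c) * T / Real.log T)) :=
      (IsEquivalent.refl (u := fun _ : ℝ => a)).mul hg1
    refine (hmain.add_isLittleO hE).congr_left ?_
    filter_upwards [hN2, hg.eventually hN2] with T h1 h2
    have := intervalIntegral.integral_add_adjacent_intervals
      (intervalIntegrable_neg_P le_rfl h1) (intervalIntegrable_neg_P h1 h2)
    simp only [Pi.add_apply]
    linarith
  have hB : (fun T => ∫ t in g T..g (T + 1 / a), Z t) ~[atTop]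
      (fun T => 1 / a * Real.log T) := by
    have h := hg2 (1 / (2 * a)) (by positivity)
    have e : 2 * (1 / (2 * a)) = 1 / a := by field_simp
    rwa [e] at h
  refine hg3.trans (IsEquivalent.symm ((hA.mul hB).congr_right ?_))
  filter_upwards [eventually_gt_atTop 1] with T hT
  have := (Real.log_pos hT).ne'
  simp only [Pi.mul_apply]
  field_simp
end
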